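/- Let H and K be complex Hilbert spaces, V ⊆ H and W ⊆ K closed subspaces, Q : H ≃ₗᵢ[ℂ] K a unitary operator, and Q₊₊, Q₋₋, Q₊₋, Q₋₊ its compressions. If Q₊₋ and Q₋₊ are compact operators, then all four kernels ker Q₊₊, ker Q₊₊†, ker Q₋₋, ker Q₋₋† are finite-dimensional and the indices are opposite: (finrank_ℂ ker Q₊₊ : ℤ) − finrank_ℂ ker Q₊₊† = −((finrank_ℂ ker Q₋₋ : ℤ) − finrank_ℂ ker Q₋₋†). -/

import Mathlib

noncomputable section

variable {H K : Type*}
  [NormedAddCommGroup H] [InnerProductSpace ℂ H] [CompleteSpace H]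
  [NormedAddCommGroup K] [InnerProductSpace ℂ K] [CompleteSpace K]

variable {H K : Type*}
  [NormedAddCommGroup H] [InnerProductSpace ℂ H] [CompleteSpace H]
  [NormedAddCommGroup K] [InnerProductSpace ℂ K] [CompleteSpace K]

/-- The compression `Q₊₊ : V → W`, `u ↦ P_W (Q u)`. -/
def Qpp (V : Submodule ℂ H) (W : Submodule ℂ K) [CompleteSpace W] (Q : H ≃ₗᵢ[ℂ] K) :
    V →L[ℂ] W :=
  (Submodule.orthogonalProjectionOnto W).comp (Q.toLinearIsometry.toContinuousLinearMap.comp V.subtypeL)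

/-- The compression `Q₋₋ : Vᗮ → Wᗮ`, `u ↦ P_{Wᗮ} (Q u)`. -/
def Qmm (V : Submodule ℂ H) (W : Submodule ℂ K) [CompleteSpace W] (Q : H ≃ₗᵢ[ℂ] K) :
    Vᗮ →L[ℂ] Wᗮ :=
  (Submodule.orthogonalProjectionOnto Wᗮ).comp (Q.toLinearIsometry.toContinuousLinearMap.comp Vᗮ.subtypeL)

/-- The compression `Q₊₋ : Vᗮ → W`, `u ↦ P_W (Q u)`. -/
def Qpm (V : Submodule ℂ H) (W : Submodule ℂ K) [CompleteSpace W] (Q : H ≃ₗᵢ[ℂ] K) :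
    Vᗮ →L[ℂ] W :=
  (Submodule.orthogonalProjectionOnto W).comp (Q.toLinearIsometry.toContinuousLinearMap.comp Vᗮ.subtypeL)

/-- The compression `Q₋₊ : V → Wᗮ`, `u ↦ P_{Wᗮ} (Q u)`. -/
def Qmp (V : Submodule ℂ H) (W : Submodule ℂ K) [CompleteSpace W] (Q : H ≃ₗᵢ[ℂ] K) :
    V →L[ℂ] Wᗮ :=
  (Submodule.orthogonalProjectionOnto Wᗮ).comp (Q.toLinearIsometry.toContinuousLinearMap.comp V.subtypeL)

/-!
A vector `u ∈ V` lies in `ker Q₊₊` exactly when `Q u ∈ Wᗮ`, that is, when `Q₋₊ u = Q u`. So on this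
closed subspace the compact operator `Q₋₊` is a closed embedding, which forces the subspace to be
finite-dimensional; likewise for `ker Q₋₋` and `Q₊₋`.

Moreover `Q` maps `ker Q₊₊ = V ∩ Q⁻¹(Wᗮ)` onto `Wᗮ ∩ Q(V)`. The latter is the kernel of the
compression `Wᗮ → Vᗮ` of `Q⁻¹`, and this compression is `Q₋₋†` because `Q⁻¹ = Q†`. Hence
`ker Q₊₊ ≃ ker Q₋₋†`, and symmetrically `ker Q₋₋ ≃ ker Q₊₊†`.
-/

theorem finiteDimensional_of_isCompactOperator_of_isClosedEmbedding
    {𝕜 X Y : Type*} [NontriviallyNormedField 𝕜] [CompleteSpace 𝕜]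
    [AddCommGroup X] [Module 𝕜 X] [TopologicalSpace X] [T2Space X] [IsTopologicalAddGroup X]
    [ContinuousSMul 𝕜 X] [TopologicalSpace Y] {f : X → Y} (hf : IsCompactOperator f)
    (hf' : Topology.IsClosedEmbedding f) : FiniteDimensional 𝕜 X :=
  let ⟨_, hC, hfC⟩ := hf
  .of_isCompactOperator_id ⟨_, hf'.isCompact_preimage hC, hfC⟩

section Compression

variable {𝕜 E F : Type*} [RCLike 𝕜]
  [NormedAddCommGroup E] [InnerProductSpace 𝕜 E] [NormedAddCommGroup F] [InnerProductSpace 𝕜 F]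

/-- The compression `u ↦ P_W (T u)` of an operator `T : E → F` to an operator `V → W`, where
`P_W` is the orthogonal projection onto `W`. -/
def compression (T : E →L[𝕜] F) (V : Submodule 𝕜 E) (W : Submodule 𝕜 F)
    [W.HasOrthogonalProjection] : V →L[𝕜] W :=
  W.orthogonalProjectionOnto ∘L T ∘L V.subtypeL

theorem ker_compression (T : E →L[𝕜] F) (V : Submodule 𝕜 E) (W : Submodule 𝕜 F)
    [W.HasOrthogonalProjection] :
    (compression T V W).ker = (Wᗮ.comap (T : E →ₗ[𝕜] F)).comap V.subtype := by
  ext x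
  exact W.orthogonalProjectionOnto_eq_zero_iff

theorem adjoint_compression [CompleteSpace E] [CompleteSpace F] (T : E →L[𝕜] F)
    (V : Submodule 𝕜 E) [CompleteSpace V] (W : Submodule 𝕜 F) [CompleteSpace W] :
    (compression T V W).adjoint = compression T.adjoint W V := by
  simp only [compression, ContinuousLinearMap.adjoint_comp, Submodule.adjoint_subtypeL,
    Submodule.adjoint_orthogonalProjectionOnto, ContinuousLinearMap.comp_assoc]

theorem finiteDimensional_ker_compression {T : E →L[𝕜] F} (hT : Topology.IsClosedEmbedding T)
    {V : Submodule 𝕜 E} (hV : IsClosed (V : Set E)) {W W' : Submodule 𝕜 F}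
    [W.HasOrthogonalProjection] [W'.HasOrthogonalProjection] (hW : Wᗮ ≤ W')
    (hc : IsCompactOperator (compression T V W')) :
    FiniteDimensional 𝕜 (compression T V W).ker := by
  let N := (compression T V W).ker
  have compression_eq :
      W'.subtypeL ∘ compression T V W' ∘ N.subtypeL = T ∘ V.subtypeL ∘ N.subtypeL := by
    funext x
    have hx : T (x : V) ∈ Wᗮ := W.orthogonalProjectionOnto_eq_zero_iff.mp x.2
    exact W'.starProjection_eq_self_iff.mpr (hW hx)
  have hcompact : IsCompactOperator (T ∘ V.subtypeL ∘ N.subtypeL) :=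
    compression_eq ▸ (hc.comp_clm N.subtypeL).clm_comp W'.subtypeL
  have hclosed : Topology.IsClosedEmbedding (T ∘ V.subtypeL ∘ N.subtypeL) :=
    hT.comp <| hV.isClosedEmbedding_subtypeVal.comp
      (compression T V W).isClosed_ker.isClosedEmbedding_subtypeVal
  exact finiteDimensional_of_isCompactOperator_of_isClosedEmbedding hcompact hclosed

/-- The isomorphism `u ↦ Q u` from `ker (compression Q V W) = V ∩ Q⁻¹(Wᗮ)` onto
`Wᗮ ∩ Q(V)`, which is the kernel of the complementary compression `Wᗮ → Vᗮ` of `Q⁻¹`. -/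
def kerCompressionEquiv (Q : E ≃L[𝕜] F) (V : Submodule 𝕜 E) [V.HasOrthogonalProjection]
    (W : Submodule 𝕜 F) [W.HasOrthogonalProjection] :
    (compression (Q : E →L[𝕜] F) V W).ker ≃ₗ[𝕜]
      (compression (Q.symm : F →L[𝕜] E) Wᗮ Vᗮ).ker :=
  have map_ker : ((compression (Q : E →L[𝕜] F) V W).ker.map V.subtype).map
      (Q.toLinearEquiv : E →ₗ[𝕜] F) =
      (compression (Q.symm : F →L[𝕜] E) Wᗮ Vᗮ).ker.map Wᗮ.subtype := by
    rw [ker_compression, ker_compression, Submodule.map_comap_subtype,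
      Submodule.map_comap_subtype, Submodule.orthogonal_orthogonal]
    ext y
    simp [Submodule.mem_map_equiv, and_comm]
  (V.equivSubtypeMap _).trans <|
    (Q.toLinearEquiv.ofSubmodules _ _ map_ker).trans (Wᗮ.equivSubtypeMap _).symm

theorem diagonal_compressions_opposite_index_general [CompleteSpace E] [CompleteSpace F]
    (V : Submodule 𝕜 E) [CompleteSpace V] (W : Submodule 𝕜 F) [CompleteSpace W] (Q : E ≃ₗᵢ[𝕜] F)
    (hpm : IsCompactOperator (compression (Q : E →L[𝕜] F) Vᗮ W))
    (hmp : IsCompactOperator (compression (Q : E →L[𝕜] F) V Wᗮ)) :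
    FiniteDimensional 𝕜 (compression (Q : E →L[𝕜] F) V W).ker ∧
    FiniteDimensional 𝕜 (compression (Q : E →L[𝕜] F) V W).adjoint.ker ∧
    FiniteDimensional 𝕜 (compression (Q : E →L[𝕜] F) Vᗮ Wᗮ).ker ∧
    FiniteDimensional 𝕜 (compression (Q : E →L[𝕜] F) Vᗮ Wᗮ).adjoint.ker ∧
    (Module.finrank 𝕜 (compression (Q : E →L[𝕜] F) V W).ker : ℤ) -
        Module.finrank 𝕜 (compression (Q : E →L[𝕜] F) V W).adjoint.ker =
      -((Module.finrank 𝕜 (compression (Q : E →L[𝕜] F) Vᗮ Wᗮ).ker : ℤ) -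
        Module.finrank 𝕜 (compression (Q : E →L[𝕜] F) Vᗮ Wᗮ).adjoint.ker) := by
  have hQ : Topology.IsClosedEmbedding (Q : E →L[𝕜] F) := Q.toHomeomorph.isClosedEmbedding
  have hV : IsClosed (V : Set E) := (completeSpace_coe_iff_isComplete.mp inferInstance).isClosed
  have fpp := finiteDimensional_ker_compression hQ hV le_rfl hmp
  have fmm := finiteDimensional_ker_compression hQ V.isClosed_orthogonal
    W.orthogonal_orthogonal.le hpm
  rw [adjoint_compression, adjoint_compression, LinearIsometryEquiv.adjoint_eq_symm]
  let eV : (compression (Q : E →L[𝕜] F) V W).ker ≃ₗ[𝕜]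
      (compression (Q.symm : F →L[𝕜] E) Wᗮ Vᗮ).ker :=
    kerCompressionEquiv Q.toContinuousLinearEquiv V W
  let eW : (compression (Q : E →L[𝕜] F) Vᗮ Wᗮ).ker ≃ₗ[𝕜]
      (compression (Q.symm : F →L[𝕜] E) W V).ker :=
    (kerCompressionEquiv Q.symm.toContinuousLinearEquiv W V).symm
  refine ⟨fpp, eW.finiteDimensional, fmm, eV.finiteDimensional, ?_⟩
  rw [eV.finrank_eq, eW.finrank_eq, neg_sub]

end Compression

/-- if the off-diagonal compressions of a unitary `Q` are compact, then
the kernels of `Q₊₊`, `Q₊₊†`, `Q₋₋`, `Q₋₋†` are finite-dimensional and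
`ind Q₊₊ = - ind Q₋₋`, where `ind T = dim ker T - dim ker T†`. -/
theorem diagonal_compressions_opposite_index
    (V : Submodule ℂ H) [CompleteSpace V] (W : Submodule ℂ K) [CompleteSpace W]
    (Q : H ≃ₗᵢ[ℂ] K)
    (hpm : IsCompactOperator (Qpm V W Q)) (hmp : IsCompactOperator (Qmp V W Q)) :
    FiniteDimensional ℂ (LinearMap.ker (Qpp V W Q).toLinearMap) ∧
    FiniteDimensional ℂ (LinearMap.ker (ContinuousLinearMap.adjoint (Qpp V W Q)).toLinearMap) ∧
    FiniteDimensional ℂ (LinearMap.ker (Qmm V W Q).toLinearMap) ∧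
    FiniteDimensional ℂ (LinearMap.ker (ContinuousLinearMap.adjoint (Qmm V W Q)).toLinearMap) ∧
    (Module.finrank ℂ (LinearMap.ker (Qpp V W Q).toLinearMap) : ℤ) -
        Module.finrank ℂ (LinearMap.ker (ContinuousLinearMap.adjoint (Qpp V W Q)).toLinearMap) =
      -((Module.finrank ℂ (LinearMap.ker (Qmm V W Q).toLinearMap) : ℤ) -
        Module.finrank ℂ (LinearMap.ker (ContinuousLinearMap.adjoint (Qmm V W Q)).toLinearMap)) := by
  exact diagonal_compressions_opposite_index_general V W Q hpm hmp

end
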